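/- arXiv:2103.00167 — 5 statements merged into one kernel-verified Lean document; each statement's English description precedes it below -/
import Mathlib

section
/- Let L be a finite, time-complete, monotone multi-entity event log. For all events e1, e2 ∈ E: e1 ⋖ e2 holds if and only if there exist an entity type et ∈ ET and an identifier id with ent et e1 = some id such that e1 and e2 occur at consecutive positions (e1 immediately followed by e2) in the trace σ_et^id of case id for entity type et. -/
/-- Event `e1` precedes `e2` in entity `id` of type `et`. -/
def precIn {E ET ID : Type*} (time : E → ℝ) (ent : ET → E → Option ID)
    (et : ET) (id : ID) (e1 e2 : E) : Prop :=
  time e1 < time e2 ∧ ent et e1 = some id ∧ ent et e2 = some id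

/-- Event `e1` directly precedes `e2` in entity `id` of type `et`. -/
def dprecIn {E ET ID : Type*} (time : E → ℝ) (ent : ET → E → Option ID)
    (et : ET) (id : ID) (e1 e2 : E) : Prop :=
  precIn time ent et id e1 e2 ∧
    ¬ ∃ e' : E, precIn time ent et id e1 e' ∧ precIn time ent et id e' e2

/-- Event `e1` directly precedes `e2` (for some entity type and identifier). -/
def dprec {E ET ID : Type*} (time : E → ℝ) (ent : ET → E → Option ID)
    (e1 e2 : E) : Prop :=
  ∃ (et : ET) (id : ID), dprecIn time ent et id e1 e2

/-- The log given by `time` and `ent` is monotone: distinct events correlated to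
the same entity of the same type have distinct timestamps. -/
def LogMonotone {E ET ID : Type*} (time : E → ℝ) (ent : ET → E → Option ID) : Prop :=
  ∀ (et : ET) (id : ID) (e1 e2 : E), e1 ≠ e2 →
    ent et e1 = some id → ent et e2 = some id → time e1 ≠ time e2

/-- `σ` is a trace of case `id` for entity type `et`: a duplicate-free list
containing exactly the events correlated to `id` for `et`, sorted by
non-decreasing time. -/
def IsTrace {E ET ID : Type*} (time : E → ℝ) (ent : ET → E → Option ID)
    (et : ET) (id : ID) (σ : List E) : Prop :=
  σ.Nodup ∧ (∀ e : E, e ∈ σ ↔ ent et e = some id) ∧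
    σ.Pairwise (fun a b => time a ≤ time b)

/-- `e1` is immediately followed by `e2` in the list `σ`. -/
def ConsecIn {E : Type*} (σ : List E) (e1 e2 : E) : Prop :=
  ∃ l1 l2 : List E, σ = l1 ++ e1 :: e2 :: l2

/-!
In a monotone log the trace of a case is strictly increasing in time. In a list that is pairwise
related by an asymmetric relation `r`, the order of the list and `r` agree on its members, so
immediate succession in the list is the covering relation of `r` among them. For `r` the order by
time, this is direct precedence.
-/

theorem consecIn_iff_of_pairwise {α : Type*} {r : α → α → Prop} [Std.Asymm r] {l : List α}
    (hl : l.Pairwise r) {a b : α} :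
    ConsecIn l a b ↔ a ∈ l ∧ b ∈ l ∧ r a b ∧ ∀ c ∈ l, r a c → ¬ r c b := by
  constructor
  · rintro ⟨l₁, l₂, rfl⟩
    simp only [List.pairwise_append, List.pairwise_cons, List.forall_mem_cons] at hl
    obtain ⟨-, ⟨⟨hab, -⟩, hb_right, -⟩, hleft⟩ := hl
    refine ⟨by simp, by simp, hab, fun c hc hac hcb ↦ ?_⟩
    simp only [List.mem_append, List.mem_cons] at hc
    obtain hc | rfl | rfl | hc := hc
    · exact asymm hac (hleft c hc).1
    · exact irrefl c hac
    · exact irrefl c hcb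
    · exact asymm hcb (hb_right c hc)
  · rintro ⟨ha, hb, hab, hbetween⟩
    obtain ⟨l₁, l₂, rfl⟩ := List.append_of_mem ha
    obtain ⟨-, hright, hleft⟩ := List.pairwise_append.1 hl
    have hb_right : b ∈ l₂ := by
      obtain hb | hb := List.mem_append.1 hb
      · exact absurd (hleft b hb a List.mem_cons_self) (asymm hab)
      · exact (List.mem_cons.1 hb).resolve_left fun hba ↦ irrefl a (hba ▸ hab)
    obtain ⟨c, l₃, rfl⟩ := List.exists_cons_of_ne_nil (List.ne_nil_of_mem hb_right)
    simp only [List.pairwise_cons, List.forall_mem_cons] at hright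
    obtain ⟨⟨hac, -⟩, hc_right, -⟩ := hright
    have hbc : b = c := (List.mem_cons.1 hb_right).resolve_right fun hb ↦
      hbetween c (by simp) hac (hc_right b hb)
    exact ⟨l₁, l₃, by rw [hbc]⟩

theorem exists_nodup_pairwise_of_finite {α : Type*} (r : α → α → Prop) [Std.Total r] [IsTrans α r]
    {s : Set α} (hs : s.Finite) :
    ∃ l : List α, l.Nodup ∧ (∀ a, a ∈ l ↔ a ∈ s) ∧ l.Pairwise r := by
  classical
  refine ⟨hs.toFinset.toList.insertionSort r, ?_, fun a ↦ ?_, List.pairwise_insertionSort r _⟩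
  · exact (List.perm_insertionSort r _).nodup_iff.2 (Finset.nodup_toList _)
  · rw [List.mem_insertionSort, Finset.mem_toList, hs.mem_toFinset]

section Trace

variable {E ET ID : Type*} {time : E → ℝ} {ent : ET → E → Option ID} {et : ET} {id : ID}

theorem exists_isTrace_of_finite (time : E → ℝ) (hfin : {e | ent et e = some id}.Finite) :
    ∃ σ, IsTrace time ent et id σ :=
  exists_nodup_pairwise_of_finite (time ⁻¹'o (· ≤ ·)) hfin

theorem IsTrace.pairwise_time_lt {σ : List E} (hσ : IsTrace time ent et id σ)
    (hmono : LogMonotone time ent) : σ.Pairwise (time ⁻¹'o (· < ·)) := by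
  obtain ⟨hnodup, hmem, hsorted⟩ := hσ
  exact (hnodup.and hsorted).imp_of_mem fun ha hb ⟨hne, hle⟩ ↦
    hle.lt_of_ne (hmono et id _ _ hne ((hmem _).1 ha) ((hmem _).1 hb))

theorem IsTrace.dprecIn_iff_consecIn {σ : List E} (hσ : IsTrace time ent et id σ)
    (hmono : LogMonotone time ent) {e1 e2 : E} :
    dprecIn time ent et id e1 e2 ↔ ConsecIn σ e1 e2 := by
  rw [consecIn_iff_of_pairwise (hσ.pairwise_time_lt hmono)]
  simp only [dprecIn, precIn, hσ.2.1, Order.Preimage]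
  grind

theorem dprecIn_iff_exists_isTrace_consecIn (hfin : {e | ent et e = some id}.Finite)
    (hmono : LogMonotone time ent) {e1 e2 : E} :
    dprecIn time ent et id e1 e2 ↔
      ∃ σ, ent et e1 = some id ∧ IsTrace time ent et id σ ∧ ConsecIn σ e1 e2 := by
  constructor
  · intro h
    obtain ⟨σ, hσ⟩ := exists_isTrace_of_finite time hfin
    exact ⟨σ, h.1.2.1, hσ, (hσ.dprecIn_iff_consecIn hmono).1 h⟩
  · rintro ⟨σ, -, hσ, h⟩
    exact (hσ.dprecIn_iff_consecIn hmono).2 h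

end Trace

theorem dprec_iff_consecutive_in_trace_general {E ET ID : Type*}
    (time : E → ℝ) (ent : ET → E → Option ID) (hmono : LogMonotone time ent)
    (hfin : ∀ et id, {e | ent et e = some id}.Finite) (e1 e2 : E) :
    dprec time ent e1 e2 ↔
      ∃ (et : ET) (id : ID) (σ : List E),
        ent et e1 = some id ∧ IsTrace time ent et id σ ∧ ConsecIn σ e1 e2 :=
  exists₂_congr fun et id ↦ dprecIn_iff_exists_isTrace_consecIn (hfin et id) hmono

/-- In a finite, time-complete, monotone multi-entity event log,
`e1 ⋖ e2` holds iff there are an entity type `et` and identifier `id` with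
`ent et e1 = some id` such that `e1` is immediately followed by `e2` in the
trace of case `id` for entity type `et`. -/
theorem dprec_iff_consecutive_in_trace {E ET ID : Type*} [Fintype E] [Fintype ET]
    (time : E → ℝ) (ent : ET → E → Option ID)
    (hmono : LogMonotone time ent) (e1 e2 : E) :
    dprec time ent e1 e2 ↔
      ∃ (et : ET) (id : ID) (σ : List E),
        ent et e1 = some id ∧ IsTrace time ent et id σ ∧ ConsecIn σ e1 e2 :=
  dprec_iff_consecutive_in_trace_general time ent hmono (fun _ _ ↦ Set.toFinite _) e1 e2
end

section
/- Let L be a finite, time-complete, monotone multi-entity event log, let et ∈ ET and let id be an identifier. Then for all events e1, e2 with ent et e1 = some id = ent et e2: time e1 < time e2 holds if and only if (e1, e2) is in the transitive closure of the direct-precedence relation ⋖_et^id. In particular, the transitive closure of ⋖_et^id equals the relation <_et^id on the correlation set corr(et,id), and it is a strict total order on corr(et,id). -/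
/-- The covering relation of `r`: the analogue of `CovBy` for a bare relation, stated by a negated
existential so that `dprecIn` is by definition the covering relation of `precIn`. -/
def RelCovBy {α : Type*} (r : α → α → Prop) (a b : α) : Prop :=
  r a b ∧ ¬ ∃ c, r a c ∧ r c b

theorem finite_Icc_of_finite_Ioo {α : Type*} [PartialOrder α] {a b : α}
    (h : (Set.Ioo a b).Finite) : (Set.Icc a b).Finite := by
  rw [← Set.Icc_sdiff_both] at h
  exact h.of_sdiff (Set.toFinite {a, b})

theorem relCovBy_lt_eq_covBy {α : Type*} [Preorder α] :
    RelCovBy ((· < ·) : α → α → Prop) = (· ⋖ ·) := by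
  ext a b
  simp only [RelCovBy, CovBy, not_exists, not_and]

theorem transGen_relCovBy_eq {α : Type*} (r : α → α → Prop) [IsStrictOrder α r]
    (hfin : ∀ a b, {c | r a c ∧ r c b}.Finite) : Relation.TransGen (RelCovBy r) = r := by
  let _ : PartialOrder α := partialOrderOfSO r
  let _ : LocallyFiniteOrder α :=
    LocallyFiniteOrder.ofFiniteIcc fun a b ↦ finite_Icc_of_finite_Ioo (hfin a b)
  change Relation.TransGen (RelCovBy ((· < ·) : α → α → Prop)) = (· < ·)
  ext a b
  rw [relCovBy_lt_eq_covBy, lt_iff_transGen_covBy]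

section EventLog

variable {E ET ID : Type*} {time : E → ℝ} {ent : ET → E → Option ID} {et : ET} {id : ID}

instance precIn.isStrictOrder : IsStrictOrder E (precIn time ent et id) where
  irrefl _ h := h.1.false
  trans _ _ _ h₁₂ h₂₃ := ⟨h₁₂.1.trans h₂₃.1, h₁₂.2.1, h₂₃.2.2⟩

theorem time_lt_iff_precIn {e1 e2 : E} (h1 : ent et e1 = some id) (h2 : ent et e2 = some id) :
    time e1 < time e2 ↔ precIn time ent et id e1 e2 :=
  ⟨(⟨·, h1, h2⟩), And.left⟩

theorem transGen_dprecIn_eq_precIn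
    (hfin : ∀ e1 e2, {e | precIn time ent et id e1 e ∧ precIn time ent et id e e2}.Finite) :
    Relation.TransGen (dprecIn time ent et id) = precIn time ent et id :=
  transGen_relCovBy_eq (precIn time ent et id) hfin

theorem precIn_or_precIn_of_ne (hinj : Set.InjOn time {e | ent et e = some id}) {e1 e2 : E}
    (h1 : ent et e1 = some id) (h2 : ent et e2 = some id) (hne : e1 ≠ e2) :
    precIn time ent et id e1 e2 ∨ precIn time ent et id e2 e1 :=
  (hinj.ne h1 h2 hne).lt_or_gt.imp (⟨·, h1, h2⟩) (⟨·, h2, h1⟩)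

theorem LogMonotone.injOn (hmono : LogMonotone time ent) (et : ET) (id : ID) :
    Set.InjOn time {e | ent et e = some id} := by
  intro e1 h1 e2 h2 htime
  by_contra hne
  exact hmono et id e1 e2 hne h1 h2 htime

theorem transGen_dprecIn_eq_precIn_and_strict_total_order_general
    (hfin : ∀ e1 e2, {e | precIn time ent et id e1 e ∧ precIn time ent et id e e2}.Finite)
    (hinj : Set.InjOn time {e | ent et e = some id}) :
    (∀ e1 e2 : E, ent et e1 = some id → ent et e2 = some id →
      (time e1 < time e2 ↔ Relation.TransGen (dprecIn time ent et id) e1 e2)) ∧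
    (∀ e1 e2 : E,
      Relation.TransGen (dprecIn time ent et id) e1 e2 ↔ precIn time ent et id e1 e2) ∧
    IsTrans E (Relation.TransGen (dprecIn time ent et id)) ∧
    Std.Irrefl (Relation.TransGen (dprecIn time ent et id)) ∧
    (∀ e1 e2 : E, ent et e1 = some id → ent et e2 = some id → e1 ≠ e2 →
      Relation.TransGen (dprecIn time ent et id) e1 e2 ∨
      Relation.TransGen (dprecIn time ent et id) e2 e1) := by
  rw [transGen_dprecIn_eq_precIn hfin]
  exact ⟨fun _ _ ↦ time_lt_iff_precIn, fun _ _ ↦ Iff.rfl, inferInstance, inferInstance,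
    fun _ _ ↦ precIn_or_precIn_of_ne hinj⟩

end EventLog

/-- In a finite, time-complete, monotone multi-entity event log,
for events correlated to entity `id` of type `et`, `time e1 < time e2` holds iff
`(e1, e2)` is in the transitive closure of `⋖_et^id`; this transitive closure
equals `<_et^id` on the correlation set, and it is a strict total order there. -/
theorem transGen_dprecIn_eq_precIn_and_strict_total_order
    {E ET ID : Type*} [Fintype E] [Fintype ET]
    (time : E → ℝ) (ent : ET → E → Option ID)
    (hmono : LogMonotone time ent) (et : ET) (id : ID) :
    (∀ e1 e2 : E, ent et e1 = some id → ent et e2 = some id →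
      (time e1 < time e2 ↔ Relation.TransGen (dprecIn time ent et id) e1 e2)) ∧
    (∀ e1 e2 : E,
      Relation.TransGen (dprecIn time ent et id) e1 e2 ↔ precIn time ent et id e1 e2) ∧
    Transitive (Relation.TransGen (dprecIn time ent et id)) ∧
    Irreflexive (Relation.TransGen (dprecIn time ent et id)) ∧
    (∀ e1 e2 : E, ent et e1 = some id → ent et e2 = some id → e1 ≠ e2 →
      Relation.TransGen (dprecIn time ent et id) e1 e2 ∨
      Relation.TransGen (dprecIn time ent et id) e2 e1) := by
  obtain ⟨hlt, hprec, htrans, hirrefl, htotal⟩ :=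
    transGen_dprecIn_eq_precIn_and_strict_total_order_general
      (fun _ _ ↦ Set.toFinite _) (hmono.injOn et id)
  exact ⟨hlt, hprec, htrans.trans, hirrefl.irrefl, htotal⟩
end

section
/- Let L be a finite, time-complete, monotone multi-entity event log with entity types ET containing a designated type pid, let E' ⊆ E be a subset of events each having a defined pid value, and let L' be the pid-restriction of L to E' with precedes relation <'. Then for all e1, e2 ∈ E': e1 <' e2 (in L') implies e1 < e2 (in L). -/
/-!
The events of one entity, ordered by time, form a locally finite preorder whose covering relation is
direct precedence. Hence precedence in an entity is a chain of direct precedences in that entity.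
A direct step of a restricted log is still a precedence in one entity of the full log, only perhaps
with further events in between, so it refines to such a chain.
-/

section Log

open Relation

variable {E F ET KT ID : Type*} {time : E → ℝ} {ent : ET → E → Option ID} {et : ET} {id : ID}

/-- The trace of the entity `id` of type `et`: the events correlated to it, preordered by time.
The parameter `time` only serves to determine the order. Simultaneous events are equivalent in this
preorder without being equal. -/
def EntityTrace (_time : E → ℝ) (ent : ET → E → Option ID) (et : ET) (id : ID) : Type _ :=
  {e : E // ent et e = some id}

namespace EntityTrace

instance : Preorder (EntityTrace time ent et id) :=
  Preorder.lift fun e => time e.val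

instance [Finite E] : Finite (EntityTrace time ent et id) :=
  Subtype.finite

noncomputable instance [Finite E] : LocallyFiniteOrder (EntityTrace time ent et id) :=
  .ofFiniteIcc fun _ _ => Set.toFinite _

theorem lt_iff_precIn {a b : EntityTrace time ent et id} :
    a < b ↔ precIn time ent et id a.val b.val :=
  ⟨fun hab => ⟨hab, a.property, b.property⟩, And.left⟩

theorem dprecIn_of_covBy {a b : EntityTrace time ent et id} (hab : a ⋖ b) :
    dprecIn time ent et id a.val b.val := by
  refine ⟨lt_iff_precIn.mp hab.lt, ?_⟩
  rintro ⟨c, hac, hcb⟩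
  let c' : EntityTrace time ent et id := ⟨c, hac.2.2⟩
  exact hab.2 (c := c') (lt_iff_precIn.mpr hac) (lt_iff_precIn.mpr hcb)

end EntityTrace

theorem transGen_dprecIn_of_precIn [LocallyFiniteOrder (EntityTrace time ent et id)] {e1 e2 : E}
    (h : precIn time ent et id e1 e2) : TransGen (dprecIn time ent et id) e1 e2 := by
  let a : EntityTrace time ent et id := ⟨e1, h.2.1⟩
  let b : EntityTrace time ent et id := ⟨e2, h.2.2⟩
  have hab : TransGen (· ⋖ ·) a b := transGen_covBy_of_lt (EntityTrace.lt_iff_precIn.mpr h)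
  exact TransGen.lift Subtype.val (fun _ _ => EntityTrace.dprecIn_of_covBy) a b hab

theorem transGen_dprec_of_precIn [LocallyFiniteOrder (EntityTrace time ent et id)] {e1 e2 : E}
    (h : precIn time ent et id e1 e2) : TransGen (dprec time ent) e1 e2 :=
  TransGen.mono (fun _ _ hd => ⟨et, id, hd⟩) e1 e2 (transGen_dprecIn_of_precIn h)

/-- Restrictions in the literal sense are the case where `f` and `κ` are inclusions. -/
theorem restriction_precedes_implies_precedes_general
    (time : E → ℝ) (ent : ET → E → Option ID) (f : F → E) (κ : KT → ET)
    [∀ k id, LocallyFiniteOrder (EntityTrace time ent (κ k) id)] (e1 e2 : F)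
    (h : TransGen (dprec (fun e => time (f e)) (fun k e => ent (κ k) (f e))) e1 e2) :
    TransGen (dprec time ent) (f e1) (f e2) := by
  refine TransGen.lift' f ?_ e1 e2 h
  rintro a b ⟨k, id, hab, -⟩
  have hprec : precIn time ent (κ k) id (f a) (f b) := hab
  exact transGen_dprec_of_precIn hprec

end Log

/-- Let `L` be a finite, time-complete, monotone multi-entity event
log with a designated entity type `pid`, and let `E'` be a subset of events each
having a defined `pid` value. Orderings in the pid-restriction `L'` of `L` to `E'`
(whose only entity type is `pid`, with direct precedence computed within `E'`)
are preserved in `L`: `e1 <' e2` implies `e1 < e2`. -/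
theorem restriction_precedes_implies_precedes
    {E ET ID : Type*} [Fintype E] [Fintype ET]
    (time : E → ℝ) (ent : ET → E → Option ID) (pid : ET)
    (hmono : LogMonotone time ent)
    (E' : Set E) (hpid : ∀ e ∈ E', (ent pid e).isSome) :
    ∀ e1 e2 : E',
      Relation.TransGen
        (dprec (fun e : E' => time e.val)
          (fun (_ : Unit) (e : E') => ent pid e.val)) e1 e2 →
      Relation.TransGen (dprec time ent) e1.val e2.val :=
  restriction_precedes_implies_precedes_general time ent Subtype.val fun _ => pid
end

section
/- There exist a finite, time-complete, monotone multi-entity event log L whose set of entity types contains a designated type pid and at least one further entity type, a subset E' of its events each having a defined pid value, and events e1, e2 ∈ E' such that e1 < e2 holds in L, but in the pid-restriction L' of L to E' neither e1 <' e2 nor e2 <' e1 holds. Hence the converse of the order-preservation property of pid-restrictions fails. -/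
/-!
A directly-precedes step always stays inside one entity, so in a log with a single entity type all
events of a precedes-chain share their entity; events of different process instances are therefore
never ordered in a pid-restriction. In the full log, however, another entity type can link them: let
two consecutive events belong to different process instances but share a resource.
-/

section Log

variable {E ET ID : Type*} {time : E → ℝ} {ent : ET → E → Option ID}

theorem logMonotone_of_injective (htime : Function.Injective time) : LogMonotone time ent :=
  fun _ _ _ _ hne _ _ ↦ htime.ne hne

theorem dprec_of_covBy [LinearOrder E] (htime : StrictMono time) {et : ET} {id : ID} {e1 e2 : E}
    (hcov : e1 ⋖ e2) (h1 : ent et e1 = some id) (h2 : ent et e2 = some id) :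
    dprec time ent e1 e2 := by
  refine ⟨et, id, ⟨htime hcov.lt, h1, h2⟩, ?_⟩
  rintro ⟨e, ⟨h1e, _⟩, ⟨he2, _⟩⟩
  exact hcov.2 (htime.lt_iff_lt.mp h1e) (htime.lt_iff_lt.mp he2)

theorem ent_eq_of_dprec [Subsingleton ET] (et : ET) {e1 e2 : E} (h : dprec time ent e1 e2) :
    ent et e1 = ent et e2 := by
  obtain ⟨et', id, ⟨_, h1, h2⟩, _⟩ := h
  rw [Subsingleton.elim et et', h1, h2]

theorem ent_eq_of_transGen_dprec [Subsingleton ET] (et : ET) {e1 e2 : E}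
    (h : Relation.TransGen (dprec time ent) e1 e2) : ent et e1 = ent et e2 := by
  simpa only [Relation.transGen_eq_self] using
    h.lift (p := Eq) (ent et) fun _ _ ↦ ent_eq_of_dprec et

theorem incompRel_transGen_dprec_restriction_of_ent_ne {pid : ET} {E' : Set E} {e1 e2 : E'}
    (hne : ent pid e1 ≠ ent pid e2) :
    IncompRel (Relation.TransGen (dprec (fun e : E' ↦ time e)
      (fun (_ : Unit) (e : E') ↦ ent pid e))) e1 e2 :=
  ⟨fun h ↦ hne (ent_eq_of_transGen_dprec () h), fun h ↦ hne (ent_eq_of_transGen_dprec () h).symm⟩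

end Log

/-- The entity types of the counterexample: a process instance, playing the role of `pid`, and a
resource that may serve several process instances. -/
inductive EntityType
  | process
  | resource

instance : Fintype EntityType where
  elems := .cons .process {.resource} (by simp)
  complete := by rintro (_ | _) <;> simp

/-- The entity assignment in which every event is a process instance of its own, identified by the
event itself, and all events share the resource `r`. -/
def sharedResourceEnt {E : Type*} (r : E) : EntityType → E → Option E
  | .process, e => some e
  | .resource, _ => some r

/-- There exist a finite, time-complete, monotone multi-entity
event log whose entity types contain a designated `pid` and at least one further
entity type, a subset `E'` of events each with a defined `pid` value, and events
`e1, e2 ∈ E'` ordered `e1 < e2` in the full log but unordered (in either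
direction) in the pid-restriction to `E'`: the converse of the
order-preservation property of pid-restrictions fails. -/
theorem restriction_precedes_converse_fails :
    ∃ (E ET ID : Type) (_ : Fintype E) (_ : Fintype ET)
      (time : E → ℝ) (ent : ET → E → Option ID) (pid : ET),
      LogMonotone time ent ∧
      (∃ et : ET, et ≠ pid) ∧
      ∃ (E' : Set E), (∀ e ∈ E', (ent pid e).isSome) ∧
        ∃ e1 e2 : E',
          Relation.TransGen (dprec time ent) e1.val e2.val ∧
          ¬ Relation.TransGen
              (dprec (fun e : E' => time e.val)
                (fun (_ : Unit) (e : E') => ent pid e.val)) e1 e2 ∧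
          ¬ Relation.TransGen
              (dprec (fun e : E' => time e.val)
                (fun (_ : Unit) (e : E') => ent pid e.val)) e2 e1 := by
  let time : Fin 2 → ℝ := fun e ↦ (e : ℕ)
  have htime : StrictMono time := Nat.strictMono_cast.comp Fin.val_strictMono
  have hcov : (0 : Fin 2) ⋖ 1 := Fin.covBy_iff.mpr (Order.covBy_add_one 0)
  have hne : sharedResourceEnt (0 : Fin 2) .process 0 ≠ sharedResourceEnt 0 .process 1 :=
    (Option.some_injective _).ne zero_ne_one
  refine ⟨Fin 2, EntityType, Fin 2, inferInstance, inferInstance, time, sharedResourceEnt 0,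
    .process, logMonotone_of_injective htime.injective, ⟨.resource, nofun⟩,
    Set.univ, fun _ _ ↦ rfl, ⟨0, trivial⟩, ⟨1, trivial⟩, ?_, ?_⟩
  · exact .single (dprec_of_covBy htime (et := .resource) hcov rfl rfl)
  · exact incompRel_transGen_dprec_restriction_of_ent_ne hne
end

section
/- Consider a FIFO queue history q : ℕ → List α with q 0 = [] in which every step is an enqueue, a dequeue, or idle, and suppose every value of α is enqueued at most once over the whole history. If a value a is enqueued at step i, a value b is enqueued at step j with i < j, a is dequeued at step k, and b is dequeued at step m, then k < m: items leave a FIFO queue in the order in which they entered it (no item can overtake another). -/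
/-- Value `a` is enqueued at step `n` of the queue history `q`. -/
def EnqAt {α : Type*} (q : ℕ → List α) (n : ℕ) (a : α) : Prop :=
  q (n + 1) = q n ++ [a]

/-- Value `a` is dequeued at step `n` of the queue history `q`. -/
def DeqAt {α : Type*} (q : ℕ → List α) (n : ℕ) (a : α) : Prop :=
  q n = a :: q (n + 1)

/-- `q` is a FIFO queue history: it starts empty and every step is an
enqueue, a dequeue, or idle. -/
def IsFifoHistory {α : Type*} (q : ℕ → List α) : Prop :=
  q 0 = [] ∧ ∀ n : ℕ, (∃ a, EnqAt q n a) ∨ (∃ b, DeqAt q n b) ∨ q (n + 1) = q n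

/-!
Every queue state lists its values in the order of their enqueue steps. If all enqueues of `a`
precede all enqueues of `b`, then `a` cannot stand behind `b`, so `a` is absent from the queue at
a step `m` dequeuing `b`. Since that `b` was enqueued before `m`, no `a` enters at or after `m`
either, and every dequeue of `a` happens before `m`.
-/

section

variable {α : Type*} {q : ℕ → List α} {m n : ℕ} {x : α}

theorem DeqAt.mem (h : DeqAt q n x) : x ∈ q n :=
  h.symm ▸ List.mem_cons_self

namespace IsFifoHistory

theorem mem_or_enqAt_of_mem_succ (hq : IsFifoHistory q) (hx : x ∈ q (n + 1)) :
    x ∈ q n ∨ EnqAt q n x := by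
  rcases hq.2 n with ⟨c, henq⟩ | ⟨c, hdeq⟩ | hidle
  · rw [henq, List.mem_append, List.mem_singleton] at hx
    exact hx.imp_right fun (hxc : x = c) => hxc ▸ henq
  · exact .inl (hdeq ▸ List.mem_cons_of_mem c hx)
  · exact .inl (hidle ▸ hx)

theorem mem_or_exists_enqAt_of_mem (hq : IsFifoHistory q) (hmn : m ≤ n) (hx : x ∈ q n) :
    x ∈ q m ∨ ∃ s, m ≤ s ∧ s < n ∧ EnqAt q s x := by
  induction n, hmn using Nat.le_induction with
  | base => exact .inl hx
  | succ n hmn ih =>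
    rcases hq.mem_or_enqAt_of_mem_succ hx with hxn | henq
    · exact (ih hxn).imp_right fun ⟨s, hms, hsn, hs⟩ => ⟨s, hms, hsn.trans n.lt_succ_self, hs⟩
    · exact .inr ⟨n, hmn, n.lt_succ_self, henq⟩

theorem exists_enqAt_of_mem (hq : IsFifoHistory q) (hx : x ∈ q n) : ∃ s < n, EnqAt q s x := by
  rcases hq.mem_or_exists_enqAt_of_mem n.zero_le hx with hx₀ | ⟨s, -, hsn, hs⟩
  · exact absurd (hq.1 ▸ hx₀) List.not_mem_nil
  · exact ⟨s, hsn, hs⟩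

theorem pairwise_enqAt_lt (hq : IsFifoHistory q) (n : ℕ) :
    (q n).Pairwise fun x y => ∃ s t, s < t ∧ EnqAt q s x ∧ EnqAt q t y := by
  induction n with
  | zero => exact hq.1 ▸ List.Pairwise.nil
  | succ n ih =>
    rcases hq.2 n with ⟨c, henq⟩ | ⟨c, hdeq⟩ | hidle
    · rw [henq, List.pairwise_append]
      refine ⟨ih, List.pairwise_singleton _ c, fun x hx y hy => ?_⟩
      obtain ⟨s, hsn, hs⟩ := hq.exists_enqAt_of_mem hx
      exact ⟨s, n, hsn, hs, List.mem_singleton.mp hy ▸ henq⟩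
    · rw [hdeq] at ih
      exact ih.of_cons
    · rwa [hidle]

theorem notMem_of_deqAt (hq : IsFifoHistory q) {a b : α}
    (hab : ∀ i j, EnqAt q i a → EnqAt q j b → i < j) (hb : DeqAt q m b) : a ∉ q m := by
  intro ha
  have hsorted := hq.pairwise_enqAt_lt m
  rw [hb] at ha hsorted
  rcases List.mem_cons.mp ha with rfl | ha_tail
  · obtain ⟨s, -, hs⟩ := hq.exists_enqAt_of_mem hb.mem
    exact (hab s s hs hs).false
  · obtain ⟨s, t, hst, hs, ht⟩ := List.rel_of_pairwise_cons hsorted ha_tail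
    exact hst.asymm (hab t s ht hs)

end IsFifoHistory

theorem fifo_no_overtaking_general (hq : IsFifoHistory q) {a b : α} {k : ℕ}
    (hab : ∀ i j, EnqAt q i a → EnqAt q j b → i < j)
    (ha : DeqAt q k a) (hb : DeqAt q m b) : k < m := by
  by_contra! hmk
  obtain ⟨s, hsm, hs⟩ := hq.exists_enqAt_of_mem hb.mem
  rcases hq.mem_or_exists_enqAt_of_mem hmk ha.mem with ham | ⟨t, hmt, -, ht⟩
  · exact hq.notMem_of_deqAt hab hb ham
  · exact (hsm.trans_le hmt).asymm (hab t s ht hs)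

end

/-- In a FIFO queue history in which every value is enqueued at
most once, items leave the queue in the order in which they entered it:
if `a` is enqueued before `b`, then `a` is dequeued before `b`. -/
theorem fifo_no_overtaking {α : Type*} (q : ℕ → List α)
    (hq : IsFifoHistory q)
    (honce : ∀ (a : α) (n m : ℕ), EnqAt q n a → EnqAt q m a → n = m)
    (a b : α) (i j k m : ℕ) (hij : i < j)
    (ha : EnqAt q i a) (hb : EnqAt q j b)
    (hka : DeqAt q k a) (hmb : DeqAt q m b) :
    k < m :=
  fifo_no_overtaking_general hq
    (fun i' j' ha' hb' => honce a i i' ha ha' ▸ honce b j j' hb hb' ▸ hij) hka hmb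
end
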